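/- Let Ω ⊆ ℝ^d be open and let f : Ω × ℝ^d → [0,∞) be convex in its second variable. Fix a nonnegative function α ∈ C_c^1(ℝ^d) with ∫_{ℝ^d} α(ξ) dξ = 1, and for j ∈ ℕ, j ≥ 1, and q ∈ ℚ^d set α_{j,q}(ξ) := j^d α(j(q − ξ)). Define a^0_{j,q}(x) := ∫_{ℝ^d} f(x,ξ)((d+1)α_{j,q}(ξ) + ⟨∇α_{j,q}(ξ), ξ⟩) dξ and a_{j,q}(x) := −∫_{ℝ^d} f(x,ξ) ∇α_{j,q}(ξ) dξ. Then for every (x,ξ) ∈ Ω × ℝ^d one has f(x,ξ) = sup_{j ∈ ℕ, q ∈ ℚ^d} max(a^0_{j,q}(x) + ⟨a_{j,q}(x), ξ⟩, 0). -/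

import Mathlib

open MeasureTheory
open scoped RealInnerProductSpace

open Filter Topology Set Function Module

/-!
Write `(c, ℓ)` for De Giorgi's affine function attached to a convex `g` and a mollifier `β`. Under
the dilation of centre `ξ` and ratio `s`, the mean of the perspective `s * g (ξ + s⁻¹ • (u - ξ))`
against `β` becomes `s ^ (d + 1) * ∫ g u * β (ξ + s • (u - ξ))`, whose derivative at `s = 1` is
exactly `c + ℓ ξ`. Perspectives are convex in `s`, so this derivative is squeezed between the
secant slopes over `[1/2, 1]` and `[1, 2]`. By midpoint convexity the second slope is at most `g ξ`.
The first is the mean of `2 * g u - g (ξ + 2 • (u - ξ))`, a continuous function of `u` with value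
`g ξ` at `ξ`, and therefore nearly `g ξ` once `β` is concentrated near `ξ`.
-/

section ParametricIntegral

variable {X G : Type*} [MeasurableSpace X] {μ : Measure X}

theorem convexOn_integral {V : Type*} [AddCommGroup V] [Module ℝ V] {S : Set V} {F : V → X → ℝ}
    (hS : Convex ℝ S) (hF : ∀ᵐ x ∂μ, ConvexOn ℝ S fun t ↦ F t x)
    (hint : ∀ t ∈ S, Integrable (F t) μ) : ConvexOn ℝ S fun t ↦ ∫ x, F t x ∂μ := by
  refine ⟨hS, fun s hs t ht a b ha hb hab ↦ ?_⟩
  dsimp only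
  rw [← integral_smul, ← integral_smul,
    ← integral_add ((hint s hs).fun_smul a) ((hint t ht).fun_smul b)]
  refine integral_mono_ae (hint _ (hS hs ht ha hb hab))
    (((hint s hs).smul a).add ((hint t ht).smul b)) ?_
  filter_upwards [hF] with x hx using hx.2 hs ht ha hb hab

theorem integrable_mul_of_hasCompactSupport [TopologicalSpace X] [OpensMeasurableSpace X]
    [IsFiniteMeasureOnCompacts μ] {β k : X → ℝ} (hβ : Continuous β) (hc : HasCompactSupport β)
    (hk : Continuous k) : Integrable (fun x ↦ β x * k x) μ :=
  (hβ.mul hk).integrable_of_hasCompactSupport hc.mul_right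

theorem hasDerivAt_integral_of_isCompact [TopologicalSpace X] [T2Space X] [OpensMeasurableSpace X]
    [IsFiniteMeasureOnCompacts μ] [NormedAddCommGroup G] [NormedSpace ℝ G]
    [SecondCountableTopologyEither X G] {F F' : ℝ → X → G} {K : Set X} {s₀ : ℝ} (hK : IsCompact K)
    (hF : ∀ s, Continuous (F s)) (hF' : Continuous (uncurry F'))
    (hderiv : ∀ s x, HasDerivAt (F · x) (F' s x) s)
    (hzero : ∀ᶠ s in 𝓝 s₀, ∀ x ∉ K, F s x = 0) :
    HasDerivAt (fun s ↦ ∫ x, F s x ∂μ) (∫ x, F' s₀ x ∂μ) s₀ := by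
  have hzero' : ∀ᶠ s in 𝓝 s₀, ∀ x ∉ K, F' s x = 0 := by
    filter_upwards [hzero.eventually_nhds] with s hs x hx
    have hconst : (F · x) =ᶠ[𝓝 s] fun _ ↦ 0 := hs.mono fun t ht ↦ ht x hx
    exact (hderiv s x).unique ((hasDerivAt_const s 0).congr_of_eventuallyEq hconst)
  obtain ⟨C, hC⟩ := ((isCompact_closedBall s₀ 1).prod hK).exists_bound_of_continuousOn
    hF'.continuousOn
  have hbound : ∀ s ∈ Metric.closedBall s₀ 1 ∩ {s | ∀ x ∉ K, F' s x = 0}, ∀ x,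
      ‖F' s x‖ ≤ K.indicator (fun _ ↦ C) x := by
    rintro s ⟨hs, hs'⟩ x
    by_cases hx : x ∈ K
    · simpa [hx] using hC (s, x) ⟨hs, hx⟩
    · simp [hx, hs' x hx]
  have hF₀ : Integrable (F s₀) μ := (hF s₀).integrable_of_hasCompactSupport <|
    HasCompactSupport.intro hK (hzero.self_of_nhds · ·)
  exact (hasDerivAt_integral_of_dominated_loc_of_deriv_le
    (inter_mem (Metric.closedBall_mem_nhds s₀ one_pos) hzero')
    (.of_forall fun s ↦ (hF s).aestronglyMeasurable) hF₀
    (hF'.uncurry_left s₀).aestronglyMeasurable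
    (.of_forall fun x s hs ↦ hbound s hs x)
    ((integrable_indicator_iff hK.measurableSet).2 (integrableOn_const hK.measure_lt_top.ne))
    (.of_forall fun x s _ ↦ hderiv s x)).2

end ParametricIntegral

theorem convexOn_perspective {E : Type*} [AddCommGroup E] [Module ℝ E] {g : E → ℝ}
    (hg : ConvexOn ℝ univ g) (ξ v : E) :
    ConvexOn ℝ (Ioi 0) fun s : ℝ ↦ s * g (ξ + s⁻¹ • v) := by
  refine ⟨convex_Ioi 0, fun s hs t ht a b ha hb hab ↦ ?_⟩
  have hr : a * s + b * t ∈ Ioi (0 : ℝ) := convex_Ioi 0 hs ht ha hb hab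
  rw [mem_Ioi] at hs ht hr
  have hweights : a * s / (a * s + b * t) + b * t / (a * s + b * t) = 1 := by
    field_simp
  have hpoint : ξ + (a * s + b * t)⁻¹ • v =
      (a * s / (a * s + b * t)) • (ξ + s⁻¹ • v) + (b * t / (a * s + b * t)) • (ξ + t⁻¹ • v) := by
    match_scalars
    · linear_combination -hweights
    · field_simp
      linear_combination -hab
  have hconv := hg.2 (mem_univ (ξ + s⁻¹ • v)) (mem_univ (ξ + t⁻¹ • v))
    (div_nonneg (mul_nonneg ha hs.le) hr.le) (div_nonneg (mul_nonneg hb ht.le) hr.le) hweights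
  simp only [smul_eq_mul] at hconv ⊢
  calc (a * s + b * t) * g (ξ + (a * s + b * t)⁻¹ • v)
    _ ≤ (a * s + b * t) * (a * s / (a * s + b * t) * g (ξ + s⁻¹ • v) +
          b * t / (a * s + b * t) * g (ξ + t⁻¹ • v)) := by
      rw [hpoint]
      exact mul_le_mul_of_nonneg_left hconv hr.le
    _ = a * (s * g (ξ + s⁻¹ • v)) + b * (t * g (ξ + t⁻¹ • v)) := by
      field_simp

section Normed

variable {E : Type*} [NormedAddCommGroup E] [NormedSpace ℝ E] {g α β : E → ℝ} {ξ : E}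

theorem continuous_of_convexOn_univ [FiniteDimensional ℝ E] (hg : ConvexOn ℝ univ g) :
    Continuous g :=
  continuousOn_univ.1 (hg.continuousOn isOpen_univ)

theorem exists_isCompact_dilation_eq_zero [FiniteDimensional ℝ E] (hc : HasCompactSupport β)
    (ξ : E) :
    ∃ K, IsCompact K ∧ ∀ᶠ s : ℝ in 𝓝 1, ∀ u ∉ K, β (ξ + s • (u - ξ)) = 0 := by
  obtain ⟨R, hR⟩ := hc.isCompact.isBounded.subset_closedBall ξ
  refine ⟨Metric.closedBall ξ (2 * R), isCompact_closedBall _ _, ?_⟩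
  filter_upwards [lt_mem_nhds (show (1 / 2 : ℝ) < 1 by norm_num)] with s hs u hu
  refine image_eq_zero_of_notMem_tsupport fun hmem ↦ hu ?_
  have hdist := hR hmem
  rw [mem_closedBall_iff_norm] at hdist ⊢
  rw [add_sub_cancel_left, norm_smul, Real.norm_of_nonneg (by linarith)] at hdist
  nlinarith [norm_nonneg (u - ξ)]

/-- The density `α`, contracted by the factor `r`, reflected and recentred at `c`: the paper's
`α_{j,q}` is `rescale α j q`. -/
noncomputable def rescale (α : E → ℝ) (r : ℝ) (c : E) : E → ℝ :=
  fun u ↦ r ^ finrank ℝ E * α (r • (c - u))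

theorem exists_support_rescale_subset {ι : Type*} {Q : ι → E} (hα : HasCompactSupport α)
    (hQ : DenseRange Q) {U : Set E} (hU : U ∈ 𝓝 ξ) :
    ∃ j : ℕ, 1 ≤ j ∧ ∃ i, support (rescale α j (Q i)) ⊆ U := by
  obtain ⟨δ, hδ, hball⟩ := Metric.mem_nhds_iff.1 hU
  obtain ⟨R, hR⟩ := hα.isCompact.isBounded.subset_closedBall 0
  obtain ⟨j, hj⟩ := exists_nat_gt (max 1 (R / (δ / 2)))
  obtain ⟨hj1, hjR⟩ := max_lt_iff.1 hj
  obtain ⟨i, hi⟩ := hQ.exists_dist_lt ξ (half_pos hδ)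
  refine ⟨j, by exact_mod_cast hj1.le, i, fun u hu ↦ hball ?_⟩
  have hmem : (j : ℝ) • (Q i - u) ∈ Metric.closedBall 0 R :=
    hR (subset_tsupport α (right_ne_zero_of_mul hu))
  rw [mem_closedBall_zero_iff, norm_smul, Real.norm_natCast, ← dist_eq_norm] at hmem
  have hdist : dist (Q i) u < δ / 2 := by
    rw [div_lt_iff₀ (half_pos hδ)] at hjR
    nlinarith
  calc dist u ξ
    _ ≤ dist u (Q i) + dist (Q i) ξ := dist_triangle u (Q i) ξ
    _ < δ := by
      rw [dist_comm u, dist_comm _ ξ]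
      linarith

end Normed

section DeGiorgi

variable {E : Type*} [NormedAddCommGroup E] [NormedSpace ℝ E] [MeasurableSpace E] {μ : Measure E}
  {g k α β : E → ℝ}

/-- A `C¹` mollifier: a compactly supported probability density with respect to `μ`. Its support
need not lie near the origin. -/
structure IsMollifier (μ : Measure E) (β : E → ℝ) : Prop where
  contDiff : ContDiff ℝ 1 β
  hasCompactSupport : HasCompactSupport β
  nonneg : ∀ u, 0 ≤ β u
  integral_eq_one : ∫ u, β u ∂μ = 1

/-- The constant term of De Giorgi's affine function, the paper's `a⁰`. The pairing
`⟨∇β(u), u⟩` is written with the Fréchet derivative, which needs no inner product. -/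
noncomputable def deGiorgiIntercept (μ : Measure E) (g β : E → ℝ) : ℝ :=
  ∫ u, g u * ((finrank ℝ E + 1) * β u + fderiv ℝ β u u) ∂μ

/-- The linear part of De Giorgi's affine function, the paper's vector `a`, encoded as a
continuous linear functional. -/
noncomputable def deGiorgiSlope (μ : Measure E) (g β : E → ℝ) : StrongDual ℝ E :=
  -∫ u, g u • fderiv ℝ β u ∂μ

/-- The mean of the perspectives `s * g (ξ + s⁻¹ • (u - ξ))` of `g` against the density `β`,
meaningful for `0 < s`. Its derivative at `s = 1` is De Giorgi's affine function at `ξ`. -/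
noncomputable def perspectiveMean (μ : Measure E) (g β : E → ℝ) (ξ : E) (s : ℝ) : ℝ :=
  ∫ u, β u * (s * g (ξ + s⁻¹ • (u - ξ))) ∂μ

theorem IsMollifier.integral_mul_const (hβ : IsMollifier μ β) (c : ℝ) : ∫ u, β u * c ∂μ = c := by
  rw [MeasureTheory.integral_mul_const, hβ.integral_eq_one, one_mul]

variable [BorelSpace E]

section FiniteOnCompacts

variable [IsFiniteMeasureOnCompacts μ]

theorem integrable_smul_fderiv (hg : Continuous g) (hβ : ContDiff ℝ 1 β)
    (hc : HasCompactSupport β) : Integrable (fun u ↦ g u • fderiv ℝ β u) μ :=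
  (hg.smul (hβ.continuous_fderiv one_ne_zero)).integrable_of_hasCompactSupport
    (hc.fderiv ℝ).smul_left

theorem deGiorgiSlope_apply (hg : Continuous g) (hβ : ContDiff ℝ 1 β) (hc : HasCompactSupport β)
    (ξ : E) : deGiorgiSlope μ g β ξ = -∫ u, g u * fderiv ℝ β u ξ ∂μ := by
  simp [deGiorgiSlope, ContinuousLinearMap.integral_apply (integrable_smul_fderiv hg hβ hc)]

theorem deGiorgiIntercept_add_deGiorgiSlope (hg : Continuous g) (hβ : ContDiff ℝ 1 β)
    (hc : HasCompactSupport β) (ξ : E) :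
    deGiorgiIntercept μ g β + deGiorgiSlope μ g β ξ =
      ∫ u, g u * ((finrank ℝ E + 1) * β u + fderiv ℝ β u (u - ξ)) ∂μ := by
  have hconst : Integrable (fun u ↦ g u * ((finrank ℝ E + 1) * β u + fderiv ℝ β u u)) μ := by
    refine Continuous.integrable_of_hasCompactSupport (by fun_prop)
      (HasCompactSupport.intro hc.isCompact fun u hu ↦ ?_)
    simp [image_eq_zero_of_notMem_tsupport hu, fderiv_of_notMem_tsupport ℝ hu]
  have hlin : Integrable (fun u ↦ g u * fderiv ℝ β u ξ) μ :=
    (integrable_smul_fderiv hg hβ hc).apply_continuousLinearMap ξ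
  rw [deGiorgiIntercept, deGiorgiSlope_apply hg hβ hc, ← sub_eq_add_neg,
    ← integral_sub hconst hlin]
  congr with u
  rw [map_sub]
  ring

end FiniteOnCompacts

namespace IsMollifier

theorem integrable_mul [IsFiniteMeasureOnCompacts μ] (hβ : IsMollifier μ β) (hk : Continuous k) :
    Integrable (fun u ↦ β u * k u) μ :=
  integrable_mul_of_hasCompactSupport hβ.contDiff.continuous hβ.hasCompactSupport hk

theorem le_integral_mul [IsFiniteMeasureOnCompacts μ] (hβ : IsMollifier μ β) (hk : Continuous k)
    {c : ℝ} (hck : ∀ u ∈ support β, c ≤ k u) : c ≤ ∫ u, β u * k u ∂μ := by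
  rw [← hβ.integral_mul_const c]
  refine integral_mono (hβ.integrable_mul continuous_const) (hβ.integrable_mul hk) fun u ↦ ?_
  by_cases hu : u ∈ support β
  · exact mul_le_mul_of_nonneg_left (hck u hu) (hβ.nonneg u)
  · simp [notMem_support.1 hu]

end IsMollifier

variable [FiniteDimensional ℝ E]

theorem convexOn_perspectiveMean [IsFiniteMeasureOnCompacts μ] (hg : ConvexOn ℝ univ g)
    (hβ : Continuous β) (hc : HasCompactSupport β) (hβ0 : ∀ u, 0 ≤ β u) (ξ : E) :
    ConvexOn ℝ (Ioi 0) (perspectiveMean μ g β ξ) := by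
  have hgcont : Continuous g := continuous_of_convexOn_univ hg
  exact convexOn_integral (convex_Ioi 0)
    (.of_forall fun u ↦ (convexOn_perspective hg ξ (u - ξ)).smul (hβ0 u))
    fun s _ ↦ integrable_mul_of_hasCompactSupport hβ hc (by fun_prop)

theorem IsMollifier.perspectiveMean_two_le [IsFiniteMeasureOnCompacts μ] (hβ : IsMollifier μ β)
    (hg : ConvexOn ℝ univ g) (ξ : E) :
    perspectiveMean μ g β ξ 2 ≤ g ξ + perspectiveMean μ g β ξ 1 := by
  have hgcont : Continuous g := continuous_of_convexOn_univ hg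
  have hmidpoint (u : E) : 2 * g (ξ + (2 : ℝ)⁻¹ • (u - ξ)) ≤ g ξ + g u := by
    have hconv := hg.2 (mem_univ ξ) (mem_univ u) (show (0 : ℝ) ≤ 2⁻¹ by norm_num)
      (show (0 : ℝ) ≤ 2⁻¹ by norm_num) (by norm_num)
    rw [show (2⁻¹ : ℝ) • ξ + (2⁻¹ : ℝ) • u = ξ + (2 : ℝ)⁻¹ • (u - ξ) by module] at hconv
    simp only [smul_eq_mul] at hconv
    linarith
  calc perspectiveMean μ g β ξ 2
    _ ≤ ∫ u, β u * (g ξ + g u) ∂μ :=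
      integral_mono (hβ.integrable_mul (by fun_prop)) (hβ.integrable_mul (by fun_prop))
        fun u ↦ mul_le_mul_of_nonneg_left (hmidpoint u) (hβ.nonneg u)
    _ = g ξ + perspectiveMean μ g β ξ 1 := by
      simp only [mul_add, perspectiveMean, inv_one, one_smul, add_sub_cancel, one_mul]
      rw [integral_add (hβ.integrable_mul continuous_const) (hβ.integrable_mul hgcont),
        hβ.integral_mul_const]

variable [μ.IsAddHaarMeasure]

theorem perspectiveMean_eq_integral_dilation (g β : E → ℝ) (ξ : E) {s : ℝ} (hs : 0 < s) :
    perspectiveMean μ g β ξ s =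
      ∫ u, s ^ (finrank ℝ E + 1) * (g u * β (ξ + s • (u - ξ))) ∂μ := by
  have hscale := Measure.integral_comp_smul_of_nonneg μ
    (fun w ↦ β (ξ + w) * (s * g (ξ + s⁻¹ • w))) s (hR := hs.le)
  simp only [inv_smul_smul₀ hs.ne', smul_eq_mul] at hscale
  calc perspectiveMean μ g β ξ s
    _ = ∫ w, β (ξ + w) * (s * g (ξ + s⁻¹ • w)) ∂μ := by
      rw [perspectiveMean, ← integral_add_left_eq_self _ ξ]
      simp
    _ = s ^ finrank ℝ E * ∫ w, β (ξ + s • w) * (s * g (ξ + w)) ∂μ := by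
      rw [hscale, mul_inv_cancel_left₀ (by positivity)]
    _ = ∫ w, s ^ (finrank ℝ E + 1) * (g (ξ + w) * β (ξ + s • w)) ∂μ := by
      rw [← integral_const_mul]
      congr with w
      ring
    _ = ∫ u, s ^ (finrank ℝ E + 1) * (g u * β (ξ + s • (u - ξ))) ∂μ := by
      rw [← integral_add_left_eq_self (fun u ↦ s ^ _ * (g u * β (ξ + s • (u - ξ)))) ξ]
      simp

theorem hasDerivAt_perspectiveMean_one (hg : Continuous g) (hβ : ContDiff ℝ 1 β)
    (hc : HasCompactSupport β) (ξ : E) :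
    HasDerivAt (perspectiveMean μ g β ξ) (deGiorgiIntercept μ g β + deGiorgiSlope μ g β ξ) 1 := by
  obtain ⟨K, hK, hzero⟩ := exists_isCompact_dilation_eq_zero hc ξ
  let F' (s : ℝ) (u : E) : ℝ := (finrank ℝ E + 1) * s ^ finrank ℝ E * (g u * β (ξ + s • (u - ξ))) +
    s ^ (finrank ℝ E + 1) * (g u * fderiv ℝ β (ξ + s • (u - ξ)) (u - ξ))
  have hderiv (s : ℝ) (u : E) : HasDerivAt
      (fun s ↦ s ^ (finrank ℝ E + 1) * (g u * β (ξ + s • (u - ξ)))) (F' s u) s := by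
    have hpath : HasDerivAt (fun s : ℝ ↦ ξ + s • (u - ξ)) (u - ξ) s := by
      simpa using ((hasDerivAt_id s).smul_const (u - ξ)).const_add ξ
    have hcomp := (hβ.differentiable one_ne_zero _).hasFDerivAt.comp_hasDerivAt s hpath
    simpa [F'] using (hasDerivAt_pow (finrank ℝ E + 1) s).fun_mul (hcomp.const_mul (g u))
  have hdilation := hasDerivAt_integral_of_isCompact (μ := μ) hK
    (fun s ↦ by fun_prop) (by fun_prop) hderiv
    (hzero.mono fun s hs u hu ↦ by rw [hs u hu, mul_zero, mul_zero])
  have hvalue : ∫ u, F' 1 u ∂μ = deGiorgiIntercept μ g β + deGiorgiSlope μ g β ξ := by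
    rw [deGiorgiIntercept_add_deGiorgiSlope hg hβ hc]
    congr with u
    simp only [F', one_pow, one_smul, add_sub_cancel]
    ring
  rw [← hvalue]
  refine hdilation.congr_of_eventuallyEq ?_
  filter_upwards [lt_mem_nhds one_pos] with s hs
    using perspectiveMean_eq_integral_dilation g β ξ hs

namespace IsMollifier

theorem deGiorgi_le (hβ : IsMollifier μ β) (hg : ConvexOn ℝ univ g) (ξ : E) :
    deGiorgiIntercept μ g β + deGiorgiSlope μ g β ξ ≤ g ξ := by
  have hgcont : Continuous g := continuous_of_convexOn_univ hg
  have hconv : ConvexOn ℝ (Ioi 0) (perspectiveMean μ g β ξ) :=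
    convexOn_perspectiveMean hg hβ.contDiff.continuous hβ.hasCompactSupport hβ.nonneg ξ
  calc deGiorgiIntercept μ g β + deGiorgiSlope μ g β ξ
    _ ≤ slope (perspectiveMean μ g β ξ) 1 2 :=
      hconv.le_slope_of_hasDerivAt (mem_Ioi.2 one_pos) (mem_Ioi.2 two_pos) one_lt_two
        (hasDerivAt_perspectiveMean_one hgcont hβ.contDiff hβ.hasCompactSupport ξ)
    _ = perspectiveMean μ g β ξ 2 - perspectiveMean μ g β ξ 1 := by
      rw [slope_def_field]
      norm_num
    _ ≤ g ξ := sub_le_iff_le_add.2 (hβ.perspectiveMean_two_le hg ξ)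

theorem integral_mul_le_deGiorgi (hβ : IsMollifier μ β) (hg : ConvexOn ℝ univ g) (ξ : E) :
    ∫ u, β u * (2 * g u - g (ξ + (2 : ℝ) • (u - ξ))) ∂μ ≤
      deGiorgiIntercept μ g β + deGiorgiSlope μ g β ξ := by
  have hgcont : Continuous g := continuous_of_convexOn_univ hg
  have hconv : ConvexOn ℝ (Ioi 0) (perspectiveMean μ g β ξ) :=
    convexOn_perspectiveMean hg hβ.contDiff.continuous hβ.hasCompactSupport hβ.nonneg ξ
  calc ∫ u, β u * (2 * g u - g (ξ + (2 : ℝ) • (u - ξ))) ∂μ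
    _ = 2 * (perspectiveMean μ g β ξ 1 - perspectiveMean μ g β ξ 2⁻¹) := by
      rw [perspectiveMean, perspectiveMean, ← integral_sub (hβ.integrable_mul (by fun_prop))
        (hβ.integrable_mul (by fun_prop)), ← integral_const_mul]
      congr with u
      simp only [inv_one, one_smul, add_sub_cancel, inv_inv]
      ring
    _ = slope (perspectiveMean μ g β ξ) 2⁻¹ 1 := by
      rw [slope_def_field]
      norm_num
      ring
    _ ≤ deGiorgiIntercept μ g β + deGiorgiSlope μ g β ξ :=
      hconv.slope_le_of_hasDerivAt (mem_Ioi.2 (by norm_num)) (mem_Ioi.2 one_pos) (by norm_num)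
        (hasDerivAt_perspectiveMean_one hgcont hβ.contDiff hβ.hasCompactSupport ξ)

theorem rescale (hα : IsMollifier μ α) {r : ℝ} (hr : 0 < r) (c : E) :
    IsMollifier μ (rescale α r c) where
  contDiff := contDiff_const.mul (hα.contDiff.comp (by fun_prop))
  hasCompactSupport :=
    ((hα.hasCompactSupport.comp_smul hr.ne').comp_homeomorph (.subLeft c)).mul_left
  nonneg u := mul_nonneg (by positivity) (hα.nonneg _)
  integral_eq_one := by
    simp only [_root_.rescale]
    rw [integral_const_mul, integral_sub_left_eq_self (fun w ↦ α (r • w)) μ c,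
      Measure.integral_comp_smul_of_nonneg μ α r (hR := hr.le), hα.integral_eq_one, smul_eq_mul,
      mul_one, mul_inv_cancel₀ (by positivity)]

end IsMollifier

theorem deGiorgi_approximation_affine_general {ι : Type*} (hg : ConvexOn ℝ univ g)
    (hα : IsMollifier μ α) {Q : ι → E} (hQ : DenseRange Q) (ξ : E) :
    IsLUB {y | ∃ j : ℕ, 1 ≤ j ∧ ∃ i, y = deGiorgiIntercept μ g (rescale α j (Q i)) +
      deGiorgiSlope μ g (rescale α j (Q i)) ξ} (g ξ) := by
  have hmollifier {j : ℕ} (hj : 1 ≤ j) (i : ι) : IsMollifier μ (rescale α j (Q i)) :=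
    hα.rescale (by positivity) (Q i)
  constructor
  · rintro _ ⟨j, hj, i, rfl⟩
    exact (hmollifier hj i).deGiorgi_le hg ξ
  · refine fun b hb ↦ le_of_forall_lt_imp_le_of_dense fun c hc ↦ ?_
    have hgcont : Continuous g := continuous_of_convexOn_univ hg
    have hsecant : Continuous fun u ↦ 2 * g u - g (ξ + (2 : ℝ) • (u - ξ)) := by fun_prop
    have hnear : ∀ᶠ u in 𝓝 ξ, c < 2 * g u - g (ξ + (2 : ℝ) • (u - ξ)) :=
      hsecant.continuousAt.eventually_const_lt (by simpa [two_mul] using hc)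
    obtain ⟨j, hj, i, hsupport⟩ := exists_support_rescale_subset hα.hasCompactSupport hQ hnear
    calc c
      _ ≤ ∫ u, rescale α j (Q i) u * (2 * g u - g (ξ + (2 : ℝ) • (u - ξ))) ∂μ :=
        (hmollifier hj i).le_integral_mul hsecant fun u hu ↦ (hsupport hu).le
      _ ≤ _ := (hmollifier hj i).integral_mul_le_deGiorgi hg ξ
      _ ≤ b := hb ⟨j, hj, i, rfl⟩

end DeGiorgi

section Gradient

variable {E : Type*} [NormedAddCommGroup E] [InnerProductSpace ℝ E] [CompleteSpace E]
  [MeasurableSpace E] {μ : Measure E} {g β : E → ℝ}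

theorem deGiorgiIntercept_eq_integral_gradient (g β : E → ℝ) :
    deGiorgiIntercept μ g β =
      ∫ u, g u * ((finrank ℝ E + 1) * β u + ⟪gradient β u, u⟫) ∂μ := by
  simp only [deGiorgiIntercept, inner_gradient_left]

theorem deGiorgiSlope_eq_toDual (g β : E → ℝ) :
    deGiorgiSlope μ g β = InnerProductSpace.toDual ℝ E (-∫ u, g u • gradient β u ∂μ) := by
  let dual : E ≃L[ℝ] StrongDual ℝ E := (InnerProductSpace.toDual ℝ E).toContinuousLinearEquiv
  have hcomm := dual.integral_comp_comm (μ := μ) fun u ↦ g u • gradient β u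
  simpa [dual, gradient, deGiorgiSlope] using hcomm

end Gradient

theorem denseRange_euclideanSpace_ratCast (ι : Type*) :
    DenseRange fun q : ι → ℚ ↦ (EuclideanSpace.equiv ι ℝ).symm fun i ↦ (q i : ℝ) :=
  (EuclideanSpace.equiv ι ℝ).symm.surjective.denseRange.comp
    (DenseRange.piMap fun _ ↦ Rat.denseRange_cast) (EuclideanSpace.equiv ι ℝ).symm.continuous

theorem isLUB_image_sup {L : Type*} [SemilatticeSup L] {S : Set L} {b m : L} (hb : IsLUB S b)
    (hm : m ≤ b) : IsLUB ((· ⊔ m) '' S) b := by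
  refine ⟨?_, fun c hc ↦ hb.2 fun y hy ↦ le_sup_left.trans (hc (mem_image_of_mem _ hy))⟩
  rintro _ ⟨y, hy, rfl⟩
  exact sup_le (hb.1 hy) hm

/-- De Giorgi's approximation of a nonnegative function, convex in its second
variable, from below by affine functions (Lemma 2.4, first part). -/
theorem deGiorgi_approximation_affine (d : ℕ) (hd : 1 ≤ d)
    (Ω : Set (EuclideanSpace ℝ (Fin d))) (hΩ : IsOpen Ω)
    (f : EuclideanSpace ℝ (Fin d) → EuclideanSpace ℝ (Fin d) → ℝ)
    (hf0 : ∀ x ∈ Ω, ∀ ξ, 0 ≤ f x ξ)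
    (hfconv : ∀ x ∈ Ω, ConvexOn ℝ Set.univ (f x))
    (α : EuclideanSpace ℝ (Fin d) → ℝ)
    (hα1 : ContDiff ℝ 1 α) (hα2 : HasCompactSupport α)
    (hα3 : ∀ ξ, 0 ≤ α ξ) (hα4 : (∫ ξ, α ξ) = 1)
    (αjq : ℕ → (Fin d → ℚ) → EuclideanSpace ℝ (Fin d) → ℝ)
    (hαjq : ∀ j q ξ, αjq j q ξ =
      (j : ℝ) ^ d * α ((j : ℝ) •
        ((EuclideanSpace.equiv (Fin d) ℝ).symm (fun i => (q i : ℝ)) - ξ)))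
    (a0 : ℕ → (Fin d → ℚ) → EuclideanSpace ℝ (Fin d) → ℝ)
    (ha0 : ∀ j q x, a0 j q x =
      ∫ ξ, f x ξ * (((d : ℝ) + 1) * αjq j q ξ + ⟪gradient (αjq j q) ξ, ξ⟫))
    (a : ℕ → (Fin d → ℚ) → EuclideanSpace ℝ (Fin d) → EuclideanSpace ℝ (Fin d))
    (ha : ∀ j q x, a j q x = - ∫ ξ, f x ξ • gradient (αjq j q) ξ) :
    ∀ x ∈ Ω, ∀ ξ, IsLUB
      {y : ℝ | ∃ j : ℕ, 1 ≤ j ∧ ∃ q : Fin d → ℚ,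
        y = max (a0 j q x + ⟪a j q x, ξ⟫) 0} (f x ξ) := by
  intro x hx ξ
  have hrescale (j : ℕ) (q : Fin d → ℚ) : αjq j q =
      rescale α j ((EuclideanSpace.equiv (Fin d) ℝ).symm fun i ↦ (q i : ℝ)) := by
    ext u
    rw [hαjq, rescale, finrank_euclideanSpace_fin]
  have haffine (j : ℕ) (q : Fin d → ℚ) : a0 j q x + ⟪a j q x, ξ⟫ =
      deGiorgiIntercept volume (f x) (αjq j q) + deGiorgiSlope volume (f x) (αjq j q) ξ := by
    rw [ha0, ha, deGiorgiIntercept_eq_integral_gradient, deGiorgiSlope_eq_toDual,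
      finrank_euclideanSpace_fin, InnerProductSpace.toDual_apply_apply]
  have himage : {y | ∃ j : ℕ, 1 ≤ j ∧ ∃ q, y = max (a0 j q x + ⟪a j q x, ξ⟫) 0} =
      (· ⊔ 0) '' {y | ∃ j : ℕ, 1 ≤ j ∧ ∃ q, y = a0 j q x + ⟪a j q x, ξ⟫} := by
    aesop
  rw [himage]
  simp only [haffine, hrescale]
  exact isLUB_image_sup (deGiorgi_approximation_affine_general (hfconv x hx)
    ⟨hα1, hα2, hα3, hα4⟩ (denseRange_euclideanSpace_ratCast (Fin d)) ξ) (hf0 x hx ξ)
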